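/- Let Γ be a strongly regular graph with parameters (v, k, λ, μ), and let r ≥ s be the real roots of x² − (λ−μ)x − (k−μ) (the eigenvalues of Γ other than k), with s < 0. Let C(x, y) = x(x+1)(v−y) − 2xy(k−y+1) + y(y−1)(λ−y+2) be the clique adjacency polynomial of Γ. Then C(⌊−μ/s⌋, ⌊2 − k/s⌋) < 0. -/

import Mathlib

/-- The clique adjacency polynomial over the reals. -/
noncomputable def cliqueAdjPoly (v k lam : ℝ) (x y : ℝ) : ℝ :=
  x * (x + 1) * (v - y) - 2 * x * y * (k - y + 1) + y * (y - 1) * (lam - y + 2)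

/-!
On the line through `(-μ/s, 2 - k/s)` of slope one the clique adjacency polynomial is a quadratic
in the distance `f` travelled downwards:
`C(-μ/s - f, 2 - k/s - f) = -(1 - f) * (f * (v - 2k + λ) + (r + 1) * (r - 2s))`.
It is negative for `0 ≤ f < 1`, since `v - 2k + λ` counts the vertices adjacent to neither end of a
given edge. As `2 - k/s = -μ/s + r + 2`, the point with floored coordinates lies on this line
whenever `r` is an integer. If `r` is not an integer then it is irrational, and integrality of its
multiplicity forces the parameters `(4μ + 1, 2μ, μ - 1, μ)` of a conference graph, for which the two
possible values of the polynomial factor explicitly.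
-/

section Multiplicity

theorem exists_trace_eq_natCast_mul_of_mul_self_eq_smul {n K : Type*} [Fintype n] [Field K]
    {B : Matrix n n K} {c : K} (hB : B * B = c • B) : ∃ m : ℕ, B.trace = m * c := by
  classical
  rcases eq_or_ne c 0 with rfl | hc
  · have hnil : IsNilpotent B := ⟨2, by rw [pow_two, hB, zero_smul]⟩
    exact ⟨0, by simpa using (Matrix.isNilpotent_trace_of_isNilpotent hnil).eq_zero⟩
  · have hidem : IsIdempotentElem (Matrix.toLin' (c⁻¹ • B)) := by
      rw [IsIdempotentElem, Module.End.mul_eq_comp, ← Matrix.toLin'_mul, Matrix.smul_mul,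
        Matrix.mul_smul, hB, inv_smul_smul₀ hc]
    have htrace := ((LinearMap.isProj_range_iff_isIdempotentElem _).2 hidem).trace
    rw [Matrix.trace_toLin'_eq, Matrix.trace_smul, smul_eq_mul, inv_mul_eq_iff_eq_mul₀ hc] at htrace
    exact ⟨_, htrace.trans (mul_comm _ _)⟩

-- For an adjacency matrix `A` and the all-ones matrix `J`, the matrix `A - s - c • J` is `r - s`
-- times the projection onto the `r`-eigenspace: `A - s` kills the `s`-eigenspace, and `c • J`
-- cancels its eigenvalue `k - s` on the constant vectors.
theorem sub_smul_one_sub_smul_mul_self {K R : Type*} [CommRing K] [Ring R] [Algebra K R] {A J : R}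
    {v k μ r s c : K} (hA : A * A = (r + s) • A - (r * s) • 1 + μ • J) (hAJ : A * J = k • J)
    (hJA : J * A = k • J) (hJJ : J * J = v • J) (hcv : c * v = k - s) (hcμ : c * (k - r) = μ) :
    (A - s • 1 - c • J) * (A - s • 1 - c • J) = (r - s) • (A - s • 1 - c • J) := by
  subst hcμ
  obtain rfl : k = c * v + s := by rw [hcv, sub_add_cancel]
  simp only [sub_mul, mul_sub, smul_mul_assoc, mul_smul_comm, mul_one, one_mul, hA, hAJ, hJA, hJJ]
  module

/-- The all-ones matrix, usually written `J`. -/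
def allOnes (V R : Type*) [One R] : Matrix V V R := Matrix.of 1

variable {V : Type*} [Fintype V] {G : SimpleGraph V} [DecidableRel G.Adj]
  {v k lam μ : ℕ} {R K : Type*} [CommRing R] [Field K]

theorem allOnes_mul_self : allOnes V R * allOnes V R = (Fintype.card V : R) • allOnes V R := by
  ext i j
  simp [allOnes, Matrix.mul_apply]

theorem adjMatrix_mul_allOnes (h : G.IsRegularOfDegree k) :
    G.adjMatrix R * allOnes V R = (k : R) • allOnes V R := by
  ext i j
  simp [allOnes, h.degree_eq i]

theorem allOnes_mul_adjMatrix (h : G.IsRegularOfDegree k) :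
    allOnes V R * G.adjMatrix R = (k : R) • allOnes V R := by
  ext i j
  simp [allOnes, h.degree_eq j]

theorem adjMatrix_mul_self_of_isSRGWith [DecidableEq V] (h : G.IsSRGWith v k lam μ) :
    G.adjMatrix R * G.adjMatrix R =
      ((lam : R) - μ) • G.adjMatrix R - ((μ : R) - k) • 1 + (μ : R) • allOnes V R := by
  rw [← pow_two, h.matrix_eq]
  simp only [← Nat.cast_smul_eq_nsmul R]
  ext i j
  rcases eq_or_ne i j with rfl | hij
  · simp [allOnes]
  · by_cases hadj : G.Adj i j <;> simp [allOnes, hij, hadj]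

theorem cast_mul_sub_sub_one_eq_of_isSRGWith [Nonempty V] (h : G.IsSRGWith v k lam μ) :
    (k : R) * (k - lam - 1) = (v - k - 1) * μ := by
  classical
  obtain ⟨i⟩ := ‹Nonempty V›
  have hAAJ := congr_arg (· * allOnes V R) (adjMatrix_mul_self_of_isSRGWith (R := R) h)
  simp only [add_mul, sub_mul, smul_mul_assoc, one_mul, mul_assoc, mul_smul_comm,
    adjMatrix_mul_allOnes h.regular, allOnes_mul_self, h.card] at hAAJ
  have hentry := congr_fun₂ hAAJ i i
  simp only [allOnes, Matrix.add_apply, Matrix.sub_apply, Matrix.smul_apply, Matrix.of_apply,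
    Pi.one_apply, smul_eq_mul, mul_one] at hentry
  linear_combination hentry

theorem exists_multiplicity_of_isSRGWith (h : G.IsSRGWith v k lam μ) {r s : K} (hv : (v : K) ≠ 0)
    (hsum : r + s = lam - μ) (hprod : r * s = μ - k) :
    ∃ m : ℕ, m * (r - s) = -s * (v - 1) - k := by
  classical
  have : Nonempty V := Fintype.card_pos_iff.1 <| Nat.pos_of_ne_zero fun h0 ↦
    hv (by rw [← h.card, h0, Nat.cast_zero])
  have hparam := cast_mul_sub_sub_one_eq_of_isSRGWith (R := K) h
  have hA := adjMatrix_mul_self_of_isSRGWith (R := K) h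
  rw [← hsum, ← hprod] at hA
  have hJJ : allOnes V K * allOnes V K = (v : K) • allOnes V K := by rw [allOnes_mul_self, h.card]
  have hμ : (k - s) / v * (k - r) = μ := by
    rw [div_mul_eq_mul_div, div_eq_iff hv]
    linear_combination hparam - k * hsum + hprod
  obtain ⟨m, hm⟩ := exists_trace_eq_natCast_mul_of_mul_self_eq_smul <|
    sub_smul_one_sub_smul_mul_self hA (adjMatrix_mul_allOnes h.regular)
      (allOnes_mul_adjMatrix h.regular) hJJ (div_mul_cancel₀ _ hv) hμ
  have htraceJ : (allOnes V K).trace = v := by simp [allOnes, Matrix.trace, h.card]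
  refine ⟨m, ?_⟩
  rw [← hm, Matrix.trace_sub, Matrix.trace_sub, Matrix.trace_smul, Matrix.trace_smul, htraceJ,
    SimpleGraph.trace_adjMatrix, Matrix.trace_one, h.card, smul_eq_mul, smul_eq_mul,
    div_mul_cancel₀ _ hv]
  ring

end Multiplicity

section Parameters

/-- The parameters `(4μ + 1, 2μ, μ - 1, μ)` of a conference graph. -/
structure IsConferenceParams (v k lam μ : ℕ) : Prop where
  v_eq : v = 4 * μ + 1
  k_eq : k = 2 * μ
  μ_eq : μ = lam + 1

theorem isConferenceParams_of_two_mul_eq {v k lam μ : ℕ} (hk : 0 < k) (hkv : k + 2 ≤ v)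
    (hparam : (k : ℤ) * (k - lam - 1) = (v - k - 1) * μ)
    (htwo : 2 * (k : ℤ) = (v - 1) * (μ - lam)) : IsConferenceParams v k lam μ := by
  have hpos : (0 : ℤ) < μ - lam := pos_of_mul_pos_right (a := (v : ℤ) - 1) (by lia) (by lia)
  have hlt : (μ : ℤ) - lam < 2 := lt_of_mul_lt_mul_left (a := (v : ℤ) - 1) (by lia) (by lia)
  obtain rfl : μ = lam + 1 := by lia
  obtain rfl : v = 2 * k + 1 := by push_cast at htwo; lia
  have hk_eq : (k : ℤ) = 2 * (lam + 1) := by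
    apply mul_left_cancel₀ (Nat.cast_ne_zero.2 hk.ne' : (k : ℤ) ≠ 0)
    push_cast at hparam
    linear_combination hparam
  exact ⟨by lia, by lia, rfl⟩

variable {V : Type*} [Fintype V] {G : SimpleGraph V} [DecidableRel G.Adj] {v k lam μ : ℕ}

theorem lam_lt_of_isSRGWith (h : G.IsSRGWith v k lam μ) (hG : G ≠ ⊥) : lam < k := by
  obtain ⟨a, b, hab⟩ := SimpleGraph.ne_bot_iff_exists_adj.1 hG
  simpa [h.of_adj a b hab, h.regular.degree_eq a] using hab.card_commonNeighbors_lt_degree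

theorem two_mul_le_add_of_isSRGWith (h : G.IsSRGWith v k lam μ) (hG : G ≠ ⊥) :
    2 * k ≤ v + lam := by
  classical
  obtain ⟨a, b, hab⟩ := SimpleGraph.ne_bot_iff_exists_adj.1 hG
  have hunion := (G.neighborFinset a ∪ G.neighborFinset b).card_le_univ
  rw [h.card_neighborFinset_union_of_adj hab, h.card] at hunion
  lia

theorem mu_le_of_isSRGWith (h : G.IsSRGWith v k lam μ) (hG : G ≠ ⊤) : μ ≤ k := by
  obtain ⟨a, b, hne, hab⟩ := SimpleGraph.ne_top_iff_exists_not_adj.1 hG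
  simpa [h.of_not_adj hne hab, h.regular.degree_eq a] using
    G.card_commonNeighbors_le_degree_left a b

theorem add_two_le_of_isSRGWith (h : G.IsSRGWith v k lam μ) (hG : G ≠ ⊤) : k + 2 ≤ v := by
  obtain ⟨a, b, hne, hab⟩ := SimpleGraph.ne_top_iff_exists_not_adj.1 hG
  have hdeg := (G.degree_lt_card_sub_one a).2 fun huniv ↦ hab (huniv hne)
  rw [h.regular.degree_eq a, h.card] at hdeg
  lia

theorem isConferenceParams_of_irrational (h : G.IsSRGWith v k lam μ) (hbot : G ≠ ⊥) (htop : G ≠ ⊤)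
    {r s : ℝ} (hsum : r + s = lam - μ) (hprod : r * s = μ - k) (hr : Irrational r) :
    IsConferenceParams v k lam μ := by
  classical
  have hkv := add_two_le_of_isSRGWith h htop
  have : Nonempty V := Fintype.card_pos_iff.1 (by rw [h.card]; lia)
  obtain ⟨m, hm⟩ := exists_multiplicity_of_isSRGWith h (by norm_cast; lia) hsum hprod
  have hlin : r * (2 * m + 1 - v : ℤ) = ((lam - μ) * (m + 1 - v) - k : ℤ) := by
    push_cast
    linear_combination hm + (m + 1 - v) * hsum
  have hm_half : (2 * m + 1 - v : ℤ) = 0 := by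
    by_contra hne
    exact (hr.mul_intCast hne).ne_int _ hlin
  rw [hm_half, Int.cast_zero, mul_zero, eq_comm, Int.cast_eq_zero] at hlin
  refine isConferenceParams_of_two_mul_eq (Nat.zero_lt_of_lt (lam_lt_of_isSRGWith h hbot)) hkv
    (cast_mul_sub_sub_one_eq_of_isSRGWith h) ?_
  linear_combination -2 * hlin + (lam - μ) * hm_half

end Parameters

section Integrality

theorem exists_int_eq_of_isIntegral_of_not_irrational {x : ℝ} (hx : IsIntegral ℤ x)
    (hrat : ¬Irrational x) : ∃ z : ℤ, x = z := by
  obtain ⟨q, rfl⟩ := exists_rat_of_not_irrational hrat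
  have hq : IsIntegral ℤ q := (isIntegral_algebraMap_iff (algebraMap ℚ ℝ).injective).1 hx
  obtain ⟨z, rfl⟩ := IsIntegrallyClosed.isIntegral_iff.1 hq
  exact ⟨z, by simp⟩

theorem isIntegral_of_add_eq_of_mul_eq {R A : Type*} [CommRing R] [CommRing A] [Algebra R A]
    {x y : A} {b c : R} (hsum : x + y = algebraMap R A b) (hprod : x * y = algebraMap R A c) :
    IsIntegral R x := by
  nontriviality R
  refine ⟨.X ^ 2 - .C b * .X + .C c, by monicity!, ?_⟩
  simp only [Polynomial.eval₂_add, Polynomial.eval₂_sub, Polynomial.eval₂_mul,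
    Polynomial.eval₂_pow, Polynomial.eval₂_X, Polynomial.eval₂_C, ← hsum, ← hprod]
  ring

end Integrality

section CliqueAdjPoly

theorem cliqueAdjPoly_sub_sub {v k lam μ r s : ℝ} (hs : s ≠ 0)
    (hparam : k * (k - lam - 1) = (v - k - 1) * μ) (hsum : r + s = lam - μ)
    (hprod : r * s = μ - k) (f : ℝ) :
    cliqueAdjPoly v k lam (-μ / s - f) (2 - k / s - f) =
      -((1 - f) * (f * (v - 2 * k + lam) + (r + 1) * (r - 2 * s))) := by
  obtain ⟨a, rfl⟩ : ∃ a, μ = -s * a := ⟨-μ / s, by field_simp⟩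
  obtain rfl : k = -s * (a + r) := by linear_combination hprod
  obtain rfl : lam = r + s - s * a := by linear_combination -hsum
  have hx : -(-s * a) / s = a := by field_simp
  have hy : 2 - -s * (a + r) / s = a + r + 2 := by field_simp; ring
  have hv : (v - 2 * (-s * (a + r)) + (r + s - s * a)) * a = -(s + 1) * r * (r + 1) := by
    apply mul_left_cancel₀ hs
    linear_combination hparam
  rw [hx, hy, cliqueAdjPoly]
  linear_combination (a - 2 * f + 1) * hv

theorem cliqueAdjPoly_floor_neg_of_int {v k lam μ r s : ℝ} (hs : s < 0) (hr : 0 ≤ r)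
    (hparam : k * (k - lam - 1) = (v - k - 1) * μ) (hsum : r + s = lam - μ)
    (hprod : r * s = μ - k) (hv : 2 * k ≤ v + lam) (hint : ∃ z : ℤ, r = z) :
    cliqueAdjPoly v k lam ⌊-μ / s⌋ ⌊2 - k / s⌋ < 0 := by
  obtain ⟨z, rfl⟩ := hint
  have hy : 2 - k / s = -μ / s + (z + 2 : ℤ) := by
    push_cast
    field_simp [hs.ne]
    linear_combination -hprod
  have hfloor : (⌊2 - k / s⌋ : ℝ) = 2 - k / s - Int.fract (-μ / s) := by
    rw [hy, Int.floor_add_intCast, Int.cast_add, ← Int.self_sub_fract]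
    ring
  rw [hfloor, ← Int.self_sub_fract, cliqueAdjPoly_sub_sub hs.ne hparam hsum hprod, neg_lt_zero]
  have hf1 : 0 < 1 - Int.fract (-μ / s) := sub_pos.2 (Int.fract_lt_one _)
  have hu : 0 ≤ v - 2 * k + lam := by linarith
  have hrs : 0 < (z : ℝ) - 2 * s := by linarith
  positivity

theorem cliqueAdjPoly_conference_two_mul_add_two (μ n : ℝ) :
    cliqueAdjPoly (4 * μ + 1) (2 * μ) (μ - 1) n (2 * n + 2) =
      (n + 1) * (2 * μ - (2 * n + 1) * (n + 2)) := by
  rw [cliqueAdjPoly]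
  ring

theorem cliqueAdjPoly_conference_two_mul_add_three (μ n : ℝ) :
    cliqueAdjPoly (4 * μ + 1) (2 * μ) (μ - 1) n (2 * n + 3) =
      2 * (n + 3) * (μ - (n + 1) * (n + 2)) := by
  rw [cliqueAdjPoly]
  ring

theorem cliqueAdjPoly_conference_floor_neg {r : ℝ} (hr : 0 ≤ r) :
    cliqueAdjPoly (4 * (r * (r + 1)) + 1) (2 * (r * (r + 1))) (r * (r + 1) - 1) ⌊r⌋ ⌊2 + 2 * r⌋
      < 0 := by
  have hn : (0 : ℝ) ≤ ⌊r⌋ := by exact_mod_cast Int.floor_nonneg.2 hr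
  have hle := Int.floor_le r
  have hlt := Int.lt_floor_add_one r
  rcases lt_or_ge (2 * r) (2 * ⌊r⌋ + 1) with hhalf | hhalf
  · have hy : ⌊2 + 2 * r⌋ = 2 * ⌊r⌋ + 2 := by
      rw [Int.floor_eq_iff]; push_cast; constructor <;> linarith
    rw [hy]
    push_cast
    rw [cliqueAdjPoly_conference_two_mul_add_two]
    exact mul_neg_of_pos_of_neg (by positivity) (by nlinarith)
  · have hy : ⌊2 + 2 * r⌋ = 2 * ⌊r⌋ + 3 := by
      rw [Int.floor_eq_iff]; push_cast; constructor <;> linarith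
    rw [hy]
    push_cast
    rw [cliqueAdjPoly_conference_two_mul_add_three]
    exact mul_neg_of_pos_of_neg (by positivity) (by nlinarith)

theorem IsConferenceParams.cliqueAdjPoly_floor_neg {v k lam μ : ℕ}
    (h : IsConferenceParams v k lam μ) {r s : ℝ} (hs : s < 0) (hr : 0 ≤ r)
    (hsum : r + s = lam - μ) (hprod : r * s = μ - k) :
    cliqueAdjPoly v k lam ⌊-(μ : ℝ) / s⌋ ⌊2 - (k : ℝ) / s⌋ < 0 := by
  have hv : (v : ℝ) = 4 * μ + 1 := by exact_mod_cast h.v_eq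
  have hk : (k : ℝ) = 2 * μ := by exact_mod_cast h.k_eq
  have hlam : (lam : ℝ) = μ - 1 := by rw [h.μ_eq]; simp
  obtain rfl : s = -(r + 1) := by linear_combination hsum + hlam
  have hμ : (μ : ℝ) = r * (r + 1) := by linear_combination hprod - hk
  have hr1 : r + 1 ≠ 0 := by positivity
  have hx : -(r * (r + 1)) / -(r + 1) = r := by field_simp
  have hy : 2 - 2 * (r * (r + 1)) / -(r + 1) = 2 + 2 * r := by field_simp; ring
  rw [hv, hk, hlam, hμ, hx, hy]
  exact cliqueAdjPoly_conference_floor_neg hr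

end CliqueAdjPoly

/-- Theorem `thm:CAB-Del` for strongly regular graphs. -/
theorem stmt_5 {V : Type*} [Fintype V] [DecidableEq V] (G : SimpleGraph V) [DecidableRel G.Adj]
    (v k lam μ : ℕ) (hsrg : G.IsSRGWith v k lam μ)
    (hnoncomplete : G ≠ ⊤) (hedge : G ≠ ⊥)
    (r s : ℝ) (hrs : s ≤ r) (hs : s < 0)
    (hr_root : r ^ 2 - ((lam : ℝ) - μ) * r - ((k : ℝ) - μ) = 0)
    (hs_root : s ^ 2 - ((lam : ℝ) - μ) * s - ((k : ℝ) - μ) = 0) :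
    cliqueAdjPoly v k lam (⌊-(μ : ℝ) / s⌋ : ℤ) (⌊2 - (k : ℝ) / s⌋ : ℤ) < 0 := by
  -- `r` may equal `s` even when `s` is a simple root, so the other root comes from Vieta.
  obtain ⟨t, -, hsum, hprod⟩ := vieta_formula_quadratic (x := s) (b := (lam : ℝ) - μ)
    (c := (μ : ℝ) - k) (by linear_combination hs_root)
  rw [add_comm] at hsum
  rw [mul_comm] at hprod
  have hμk : (μ : ℝ) ≤ k := by exact_mod_cast mu_le_of_isSRGWith hsrg hnoncomplete
  have ht : 0 ≤ t := nonneg_of_mul_nonpos_left (hprod.trans_le (sub_nonpos.2 hμk)) hs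
  by_cases hirr : Irrational t
  · exact (isConferenceParams_of_irrational hsrg hedge hnoncomplete hsum hprod
      hirr).cliqueAdjPoly_floor_neg hs ht hsum hprod
  · have hintegral : IsIntegral ℤ t := isIntegral_of_add_eq_of_mul_eq
      (b := (lam : ℤ) - μ) (c := (μ : ℤ) - k) (by simpa using hsum) (by simpa using hprod)
    have : Nonempty V := (SimpleGraph.ne_bot_iff_exists_adj.1 hedge).nonempty
    exact cliqueAdjPoly_floor_neg_of_int hs ht (cast_mul_sub_sub_one_eq_of_isSRGWith hsrg) hsum
      hprod (by exact_mod_cast two_mul_le_add_of_isSRGWith hsrg hedge)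
      (exists_int_eq_of_isIntegral_of_not_irrational hintegral hirr)
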